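/- Let Γ be a distance-regular graph with classical parameters (D, b, α, β), D ≥ 3, and intersection numbers a₁ = 0 and a₂ ≠ 0. Then for any vertex x, any 1 ≤ i ≤ D, and any adjacent vertices z, z′ ∈ Γ_i(x), one has B(x,z) = B(x,z′). -/

import Mathlib

/-!
Common definitions: distance-regular graphs (via an intersection-number function `p`),
classical parameters, and the sets `B(x,y)`, `A(x,y)`, `C(x,y)`.
The distance `∂` is `SimpleGraph.dist`.
-/

variable {V : Type*}

/-- `Γ` is distance-regular with intersection numbers `p h i j = p^h_{ij}`
(for indices up to the diameter `D`). -/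
def SimpleGraph.IsDistRegularWith (G : SimpleGraph V) (D : ℕ) (p : ℕ → ℕ → ℕ → ℕ) : Prop :=
  ∀ h i j : ℕ, h ≤ D → i ≤ D → j ≤ D → ∀ x y : V, G.dist x y = h →
    {z : V | G.dist x z = i ∧ G.dist y z = j}.ncard = p h i j

/-- The Gaussian bracket `[i] = 1 + b + b² + ⋯ + b^{i-1}`. -/
def gaussBracket (b : ℝ) (i : ℕ) : ℝ := ∑ k ∈ Finset.range i, b ^ k

/-- A distance-regular graph with intersection numbers `p` has classical parameters
`(D, b, α, β)`: `b ∉ {0, -1}`, `c_i = [i](1 + α[i-1])` and `b_i = ([D]-[i])(β - α[i])`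
for `0 ≤ i ≤ D`, where `c_i = p^i_{1,i-1}` and `b_i = p^i_{1,i+1}`. -/
def HasClassicalParams (D : ℕ) (p : ℕ → ℕ → ℕ → ℕ) (b α β : ℝ) : Prop :=
  b ≠ 0 ∧ b ≠ -1 ∧
    (∀ i ≤ D, (p i 1 (i - 1) : ℝ) = gaussBracket b i * (1 + α * gaussBracket b (i - 1))) ∧
    (∀ i ≤ D, (p i 1 (i + 1) : ℝ) =
      (gaussBracket b D - gaussBracket b i) * (β - α * gaussBracket b i))

/-- `B(x,y) = Γ₁(x) ∩ Γ_{∂(x,y)+1}(y)`. -/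
def Bset (G : SimpleGraph V) (x y : V) : Set V :=
  {v | G.dist x v = 1 ∧ G.dist y v = G.dist x y + 1}

/-- `A(x,y) = Γ₁(x) ∩ Γ_{∂(x,y)}(y)`. -/
def Aset (G : SimpleGraph V) (x y : V) : Set V :=
  {v | G.dist x v = 1 ∧ G.dist y v = G.dist x y}

/-- `C(x,y) = Γ₁(x) ∩ Γ_{∂(x,y)-1}(y)`. -/
def Cset (G : SimpleGraph V) (x y : V) : Set V :=
  {v | G.dist x v = 1 ∧ G.dist y v = G.dist x y - 1}

/-!
Orthogonalizing the matrices with entries `(b⁻¹ ^ ∂(y, z)) ^ m` for `m = 0, 1, …, D` gives the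
primitive idempotents `E_0, …, E_D` up to scalars: for classical parameters the adjacency matrix
maps the `m`-th matrix to a combination of those of index at most `m`. As the entrywise product of
`E_1` and `E_i` has degree at most `i + 1`, the Krein parameter of `(1, i, j)` vanishes if
`|i - j| > 1`. Krein parameters being sums of squares, this forces
`E_i * diagonal (E_1 x) * E_j = 0` for `|i - j| > 1`, where `E_1 x` is the row of `x`. Expanding
`A_r * diagonal (E_1 x) * A_s - A_s * diagonal (E_1 x) * A_r` in the components `E_i _ E_j` then
gives Terwilliger's balanced set condition, a linear relation with coefficients independent of the
base vertex `x`.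

Take `w ∈ B(x, z)` and compare this relation for the sets `Γ₁(x) ∩ Γ_i(z)` and `Γ_i(x) ∩ Γ₁(z)`,
once with base vertex `x` and once with base vertex `w`. As `a₁ = 0`, every vertex of the first set
is at distance `2` from `w`, so the only unknown is the number of vertices of the second set at
distance `i` from `w`. The two relations show that it is zero, hence `w ∈ B(x, z')`.
-/

open Finset Matrix InnerProductSpace

section GramSchmidt

variable {𝕜 E ι : Type*} [RCLike 𝕜] [NormedAddCommGroup E] [InnerProductSpace 𝕜 E]
  [LinearOrder ι] [LocallyFiniteOrderBot ι] [WellFoundedLT ι]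

theorem inner_gramSchmidt_eq_zero_of_mem_span (v : ι → E) (i : ι) {y : E}
    (hy : y ∈ Submodule.span 𝕜 (v '' Set.Iio i)) : inner 𝕜 (gramSchmidt 𝕜 v i) y = 0 := by
  rw [← span_gramSchmidt_Iio] at hy
  induction hy using Submodule.span_induction with
  | mem _ h =>
    obtain ⟨j, hj, rfl⟩ := h
    exact gramSchmidt_orthogonal 𝕜 v (ne_of_gt hj)
  | zero => exact inner_zero_right _
  | add _ _ _ _ h₁ h₂ => rw [inner_add_right, h₁, h₂, add_zero]
  | smul a _ _ h => rw [inner_smul_right, h, mul_zero]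

theorem sub_gramSchmidt_mem_span (v : ι → E) (i : ι) :
    v i - gramSchmidt 𝕜 v i ∈ Submodule.span 𝕜 (v '' Set.Iio i) := by
  rw [gramSchmidt_def, sub_sub_cancel, ← span_gramSchmidt_Iio]
  refine Submodule.sum_mem _ fun j hj => ?_
  rw [Submodule.starProjection_singleton]
  exact Submodule.smul_mem _ _ (Submodule.subset_span ⟨j, Finset.mem_Iio.1 hj, rfl⟩)

theorem exists_apply_gramSchmidt_eq_smul {T : E →ₗ[𝕜] E} (hT : T.IsSymmetric) {v : ι → E}
    (hv : ∀ i, T (v i) ∈ Submodule.span 𝕜 (v '' Set.Iic i)) (i : ι) :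
    ∃ θ : 𝕜, T (gramSchmidt 𝕜 v i) = θ • gramSchmidt 𝕜 v i := by
  have apply_mem_span {S : Set ι} (hS : IsLowerSet S) {y : E}
      (hy : y ∈ Submodule.span 𝕜 (v '' S)) : T y ∈ Submodule.span 𝕜 (v '' S) := by
    refine (Submodule.span_le (p := (Submodule.span 𝕜 (v '' S)).comap T)).2 ?_ hy
    rintro _ ⟨k, hk, rfl⟩
    exact Submodule.span_mono (Set.image_mono (hS.Iic_subset hk)) (hv k)
  have apply_mem := apply_mem_span (isLowerSet_Iic i) (gramSchmidt_mem_span 𝕜 v le_rfl)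
  rw [← span_gramSchmidt_Iic, ← Set.Iio_insert, Set.image_insert_eq,
    Submodule.mem_span_insert] at apply_mem
  obtain ⟨θ, y, hy, apply_eq⟩ := apply_mem
  rw [span_gramSchmidt_Iio] at hy
  have inner_y_y : inner 𝕜 y y = 0 := by
    nth_rw 1 [eq_sub_of_add_eq' apply_eq.symm]
    rw [inner_sub_left, inner_smul_left, hT,
      inner_gramSchmidt_eq_zero_of_mem_span v i (apply_mem_span (isLowerSet_Iio i) hy),
      inner_gramSchmidt_eq_zero_of_mem_span v i hy, mul_zero, sub_zero]
  exact ⟨θ, by rw [apply_eq, inner_self_eq_zero.1 inner_y_y, add_zero]⟩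

end GramSchmidt

section MatrixGramSchmidt

variable {n : Type*} [Fintype n] [DecidableEq n]

/-- The norm of the inner product `traceFormInnerProductSpace`. -/
noncomputable abbrev traceFormNormedAddCommGroup : NormedAddCommGroup (Matrix n n ℝ) :=
  toMatrixNormedAddCommGroup 1 PosDef.one

attribute [local instance] traceFormNormedAddCommGroup

/-- The inner product `tr (Xᵀ Y)` on real matrices, obtained from Mathlib's `tr (Y M Xᴴ)` with
`M = 1`. It is only a local instance, as matrices carry no canonical norm. -/
noncomputable abbrev traceFormInnerProductSpace : InnerProductSpace ℝ (Matrix n n ℝ) :=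
  toMatrixInnerProductSpace 1 PosSemidef.one

attribute [local instance] traceFormInnerProductSpace

theorem inner_traceForm_eq_sum (X Y : Matrix n n ℝ) :
    inner ℝ X Y = ∑ i, ∑ j, X i j * Y i j := by
  change (Y * 1 * Xᴴ).trace = _
  rw [Matrix.mul_one, conjTranspose_eq_transpose_of_trivial, ← sum_hadamard_eq]
  simp only [hadamard_apply, mul_comm]

theorem isSymmetric_mulLeft {A : Matrix n n ℝ} (hA : A.IsSymm) :
    (LinearMap.mulLeft ℝ A).IsSymmetric := by
  intro X Y
  change (Y * 1 * (A * X)ᴴ).trace = (A * Y * 1 * Xᴴ).trace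
  simp only [Matrix.mul_one, conjTranspose_eq_transpose_of_trivial, transpose_mul, hA.eq]
  rw [← Matrix.mul_assoc, Matrix.trace_mul_comm, Matrix.mul_assoc]

/-- The Gram–Schmidt orthogonalization of a sequence of real matrices for the inner product
`tr (Xᵀ Y)`. Naming it keeps the local norm on matrices out of all later statements. -/
noncomputable def matrixGramSchmidt (v : ℕ → Matrix n n ℝ) : ℕ → Matrix n n ℝ :=
  gramSchmidt ℝ v

theorem span_matrixGramSchmidt_Iic (v : ℕ → Matrix n n ℝ) (m : ℕ) :
    Submodule.span ℝ (matrixGramSchmidt v '' Set.Iic m) = Submodule.span ℝ (v '' Set.Iic m) :=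
  span_gramSchmidt_Iic ℝ v m

theorem sub_matrixGramSchmidt_mem_span (v : ℕ → Matrix n n ℝ) (m : ℕ) :
    v m - matrixGramSchmidt v m ∈ Submodule.span ℝ (v '' Set.Iio m) :=
  sub_gramSchmidt_mem_span v m

theorem sum_matrixGramSchmidt_mul_eq_zero (v : ℕ → Matrix n n ℝ) (m : ℕ) {X : Matrix n n ℝ}
    (hX : X ∈ Submodule.span ℝ (v '' Set.Iio m)) :
    ∑ i, ∑ j, matrixGramSchmidt v m i j * X i j = 0 := by
  rw [← inner_traceForm_eq_sum]
  exact inner_gramSchmidt_eq_zero_of_mem_span v m hX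

theorem exists_mul_matrixGramSchmidt_eq_smul {A : Matrix n n ℝ} (hA : A.IsSymm)
    {v : ℕ → Matrix n n ℝ} (hv : ∀ m, A * v m ∈ Submodule.span ℝ (v '' Set.Iic m)) (m : ℕ) :
    ∃ θ : ℝ, A * matrixGramSchmidt v m = θ • matrixGramSchmidt v m :=
  exists_apply_gramSchmidt_eq_smul (isSymmetric_mulLeft hA) hv m

end MatrixGramSchmidt

section TripleProduct

theorem sum_sq_sum_mul_mul_eq {l m n v R : Type*} [Fintype l] [Fintype m] [Fintype n] [Fintype v]
    [CommSemiring R] (P : Matrix l v R) (Q : Matrix m v R) (S : Matrix n v R) :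
    ∑ t : l × m × n, (∑ u, P t.1 u * Q t.2.1 u * S t.2.2 u) ^ 2 =
      ∑ u, ∑ w, (Pᵀ * P) u w * (Qᵀ * Q) u w * (Sᵀ * S) u w := by
  simp only [sq, sum_mul_sum]
  rw [sum_comm]
  refine sum_congr rfl fun u _ => ?_
  rw [sum_comm]
  refine sum_congr rfl fun w _ => ?_
  rw [mul_assoc, mul_apply, mul_apply, mul_apply, sum_mul_sum, sum_mul_sum, Fintype.sum_prod_type]
  simp only [mul_sum, transpose_apply, Fintype.sum_prod_type]
  refine sum_congr rfl fun i _ => sum_congr rfl fun j _ => sum_congr rfl fun k _ => ?_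
  ring

variable {n : Type*} [Fintype n] [DecidableEq n]

/-- The squares of the entries of all `P * diagonal (Q x) * S` add up to a multiple of the sum in
`hPQS`, which for primitive idempotents is a Krein parameter up to a positive factor. -/
theorem mul_diagonal_mul_eq_zero {P Q S : Matrix n n ℝ} (hP : P.IsSymm) (hQ : Q.IsSymm)
    (hS : S.IsSymm) {p q s : ℝ} (hPP : P * P = p • P) (hQQ : Q * Q = q • Q) (hSS : S * S = s • S)
    (hPQS : ∑ u, ∑ w, P u w * Q u w * S u w = 0) (x : n) : P * diagonal (Q x) * S = 0 := by
  have sum_sq_eq_zero : ∑ t : n × n × n, (∑ u, P t.1 u * Q t.2.1 u * S t.2.2 u) ^ 2 = 0 := by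
    rw [sum_sq_sum_mul_mul_eq, hP.eq, hQ.eq, hS.eq, hPP, hQQ, hSS, ← mul_zero (p * q * s), ← hPQS]
    simp only [mul_sum, Matrix.smul_apply, smul_eq_mul]
    refine sum_congr rfl fun u _ => sum_congr rfl fun w _ => ?_
    ring
  ext i k
  have sq_eq_zero := (sum_eq_zero_iff_of_nonneg fun _ _ => sq_nonneg _).1 sum_sq_eq_zero (i, x, k)
    (mem_univ _)
  rw [Matrix.zero_apply, mul_apply, ← pow_eq_zero_iff two_ne_zero, ← sq_eq_zero]
  simp only [mul_diagonal, hS.apply k]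

end TripleProduct

section Tridiagonal

variable {R A : Type*} [CommRing R] [Ring A] [Algebra R A]

theorem sum_smul_mul_mul_sum_smul (E : ℕ → A) (N : ℕ) (f g : ℕ → R) (a : A) :
    (∑ i ∈ range N, f i • E i) * a * (∑ i ∈ range N, g i • E i) =
      ∑ i ∈ range N, ∑ j ∈ range N, (f i * g j) • (E i * a * E j) := by
  simp only [sum_mul, mul_sum, smul_sum, smul_mul_assoc, mul_smul_comm, smul_smul]
  rw [sum_comm]
  simp only [mul_comm]

theorem exists_forall_tridiagonal_commutator_eq {E : ℕ → A} {N : ℕ} (hE : ∑ i ∈ range N, E i = 1)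
    (r s : ℕ → R) : ∃ ζ : ℕ → R, ∀ a : A,
      (∀ i j, i + 1 < j ∨ j + 1 < i → E i * a * E j = 0) →
      (∑ i ∈ range N, r i • E i) * a * (∑ i ∈ range N, s i • E i) -
        (∑ i ∈ range N, s i • E i) * a * (∑ i ∈ range N, r i • E i) =
      (∑ i ∈ range N, ζ i • E i) * a - a * ∑ i ∈ range N, ζ i • E i := by
  -- On the `(i, j)` component the claim reads `r i * s j - s i * r j = ζ i - ζ j`; it is required
  -- only for `|i - j| ≤ 1`, where it amounts to a recursion for `ζ`.
  let ζ (i : ℕ) : R := ∑ k ∈ range i, (r (k + 1) * s k - r k * s (k + 1))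
  refine ⟨ζ, fun a ha => ?_⟩
  have ζ_succ (k : ℕ) : ζ (k + 1) = ζ k + (r (k + 1) * s k - r k * s (k + 1)) :=
    sum_range_succ _ _
  have hE' : ∑ i ∈ range N, (1 : R) • E i = 1 := by simpa only [one_smul] using hE
  have left := sum_smul_mul_mul_sum_smul E N ζ (fun _ => 1) a
  have right := sum_smul_mul_mul_sum_smul E N (fun _ => 1) ζ a
  rw [hE', mul_one] at left
  rw [hE', one_mul] at right
  rw [left, right, sum_smul_mul_mul_sum_smul, sum_smul_mul_mul_sum_smul,
    ← sum_sub_distrib, ← sum_sub_distrib]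
  refine sum_congr rfl fun i _ => ?_
  rw [← sum_sub_distrib, ← sum_sub_distrib]
  refine sum_congr rfl fun j _ => ?_
  by_cases hij : i + 1 < j ∨ j + 1 < i
  · rw [ha i j hij]; simp only [smul_zero]
  rw [← sub_smul, ← sub_smul]
  congr 1
  obtain rfl | rfl | rfl : j = i ∨ j = i + 1 ∨ i = j + 1 := by omega
  · ring
  · rw [ζ_succ]; ring
  · rw [ζ_succ]; ring

end Tridiagonal

section DistMatrix

/-- The matrix with `(y, z)`-entry `f (∂(y, z))`, that is `∑ i, f i • A_i` for the distance matrices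
`A_i` of `G`. In particular `distMatrix G (Pi.single i 1)` is `A_i`. -/
noncomputable def distMatrix (G : SimpleGraph V) : (ℕ → ℝ) →ₗ[ℝ] Matrix V V ℝ where
  toFun f := of fun y z => f (G.dist y z)
  map_add' _ _ := rfl
  map_smul' _ _ := rfl

@[simp]
theorem distMatrix_apply (G : SimpleGraph V) (f : ℕ → ℝ) (y z : V) :
    distMatrix G f y z = f (G.dist y z) :=
  rfl

theorem isSymm_distMatrix (G : SimpleGraph V) (f : ℕ → ℝ) : (distMatrix G f).IsSymm := by
  ext y z
  rw [transpose_apply, distMatrix_apply, distMatrix_apply, SimpleGraph.dist_comm]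

theorem distMatrix_hadamard (G : SimpleGraph V) (f g : ℕ → ℝ) :
    distMatrix G f ⊙ distMatrix G g = distMatrix G (f * g) :=
  rfl

theorem distMatrix_single_zero [DecidableEq V] {G : SimpleGraph V} (hG : G.Connected) :
    distMatrix G (Pi.single 0 1) = 1 := by
  ext y z
  simp only [distMatrix_apply, Pi.single_apply, one_apply, hG.dist_eq_zero_iff]

theorem exists_dist_eq_of_le_dist {G : SimpleGraph V} (hG : G.Connected) {x y : V} {i : ℕ}
    (hi : i ≤ G.dist x y) : ∃ v, G.dist x v = i ∧ G.dist v y = G.dist x y - i := by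
  obtain ⟨w, hw⟩ := hG.exists_walk_length_eq_dist x y
  have dist_left : G.dist x (w.getVert i) ≤ i :=
    (SimpleGraph.dist_le (w.take i)).trans (by simp)
  have dist_right : G.dist (w.getVert i) y ≤ G.dist x y - i :=
    (SimpleGraph.dist_le (w.drop i)).trans (by simp [hw])
  have triangle := hG.dist_triangle (u := x) (v := w.getVert i) (w := y)
  exact ⟨w.getVert i, by omega, by omega⟩

end DistMatrix

/-- `G` is distance-regular of diameter `D` with intersection numbers `p`. The last field is
`b_D = 0`; it is not part of `SimpleGraph.IsDistRegularWith`, which leaves `p D 1 (D + 1)` free. -/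
structure IsDistanceRegular (G : SimpleGraph V) (D : ℕ) (p : ℕ → ℕ → ℕ → ℕ) : Prop where
  connected : G.Connected
  dist_le : ∀ x y, G.dist x y ≤ D
  exists_dist_eq_diam : ∃ x y, G.dist x y = D
  isDistRegularWith : G.IsDistRegularWith D p
  intersection_diam : p D 1 (D + 1) = 0

/-- The action of the adjacency matrix on functions `f` of the distance, that is
`c_h f (h - 1) + a_h f h + b_h f (h + 1)` with `a_h` written as `k - c_h - b_h`, where `k` is the
valency. At `h = 0` the truncated `h - 1` is harmless: the difference it occurs in vanishes. -/
noncomputable def adjAction (p : ℕ → ℕ → ℕ → ℕ) (f : ℕ → ℝ) (h : ℕ) : ℝ :=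
  p 0 1 1 * f h + p h 1 (h - 1) * (f (h - 1) - f h) + p h 1 (h + 1) * (f (h + 1) - f h)

theorem adjAction_single_succ (p : ℕ → ℕ → ℕ → ℕ) (k : ℕ) :
    adjAction p (Pi.single k 1) (k + 1) = p (k + 1) 1 k := by
  have succ_ne : k + 1 + 1 ≠ k := by omega
  simp [adjAction, succ_ne]

theorem adjAction_single_of_lt (p : ℕ → ℕ → ℕ → ℕ) {k h : ℕ} (hkh : k + 1 < h) :
    adjAction p (Pi.single k 1) h = 0 := by
  have h_ne : h ≠ k := by omega
  have pred_ne : h - 1 ≠ k := by omega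
  have succ_ne : h + 1 ≠ k := by omega
  simp [adjAction, h_ne, pred_ne, succ_ne]

namespace IsDistanceRegular

variable {G : SimpleGraph V} {D : ℕ} {p : ℕ → ℕ → ℕ → ℕ}

theorem exists_dist_eq (hG : IsDistanceRegular G D p) {i : ℕ} (hi : i ≤ D) :
    ∃ x y, G.dist x y = i := by
  obtain ⟨x, y, hxy⟩ := hG.exists_dist_eq_diam
  obtain ⟨v, hv, -⟩ := exists_dist_eq_of_le_dist hG.connected (hi.trans_eq hxy.symm)
  exact ⟨x, v, hv⟩

theorem intersection_comm (hG : IsDistanceRegular G D p) {h i j : ℕ} (hh : h ≤ D) (hi : i ≤ D)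
    (hj : j ≤ D) : p h i j = p h j i := by
  obtain ⟨y, z, hyz⟩ := hG.exists_dist_eq hh
  rw [← hG.isDistRegularWith h i j hh hi hj y z hyz,
    ← hG.isDistRegularWith h j i hh hj hi z y (SimpleGraph.dist_comm.trans hyz)]
  simp only [and_comm]

section Fintype

variable [Fintype V]

theorem card_filter_dist (hG : IsDistanceRegular G D p) {i j : ℕ} (hi : i ≤ D) (hj : j ≤ D)
    (y z : V) : #{v | G.dist y v = i ∧ G.dist z v = j} = p (G.dist y z) i j := by
  rw [← hG.isDistRegularWith _ i j (hG.dist_le y z) hi hj y z rfl, ← Set.ncard_coe_finset]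
  simp only [coe_filter, mem_univ, true_and]

theorem card_filter_dist_succ (hG : IsDistanceRegular G D p) (hD : 1 ≤ D) (y z : V) :
    #{v | G.dist y v = 1 ∧ G.dist z v = G.dist y z + 1} = p (G.dist y z) 1 (G.dist y z + 1) := by
  obtain hlt | heq := (hG.dist_le y z).lt_or_eq
  · exact hG.card_filter_dist hD hlt y z
  · rw [heq, hG.intersection_diam, card_eq_zero, filter_eq_empty_iff]
    rintro v - ⟨-, hv⟩
    exact (hG.dist_le z v).not_gt (by omega)

theorem card_filter_dist_eq_one (hG : IsDistanceRegular G D p) (hD : 1 ≤ D) (y : V) :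
    #{v | G.dist y v = 1} = p 0 1 1 := by
  simpa only [and_self, SimpleGraph.dist_self] using hG.card_filter_dist hD hD y y

theorem sum_dist_dist (hG : IsDistanceRegular G D p) (F : ℕ × ℕ → ℝ) (y z : V) :
    ∑ v, F (G.dist y v, G.dist z v) =
      ∑ ij ∈ range (D + 1) ×ˢ range (D + 1), p (G.dist y z) ij.1 ij.2 * F ij := by
  have maps_to : ∀ v ∈ univ, (G.dist y v, G.dist z v) ∈ range (D + 1) ×ˢ range (D + 1) := by
    intro v _
    have hy := hG.dist_le y v
    have hz := hG.dist_le z v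
    rw [mem_product, mem_range, mem_range]
    omega
  rw [← sum_fiberwise_of_maps_to' maps_to]
  refine sum_congr rfl fun ⟨i, j⟩ hij => ?_
  rw [mem_product, mem_range, mem_range] at hij
  rw [sum_const, nsmul_eq_mul, ← hG.card_filter_dist (by omega : i ≤ D) (by omega : j ≤ D)]
  simp only [Prod.mk.injEq]

theorem distMatrix_mul_mem_range (hG : IsDistanceRegular G D p) (f g : ℕ → ℝ) :
    distMatrix G f * distMatrix G g ∈ LinearMap.range (distMatrix G) := by
  refine ⟨fun h => ∑ ij ∈ range (D + 1) ×ˢ range (D + 1), p h ij.1 ij.2 * (f ij.1 * g ij.2), ?_⟩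
  ext y z
  rw [distMatrix_apply, ← hG.sum_dist_dist (fun ij => f ij.1 * g ij.2), mul_apply]
  simp only [distMatrix_apply, SimpleGraph.dist_comm (v := z)]

theorem commute_distMatrix (hG : IsDistanceRegular G D p) (f g : ℕ → ℝ) :
    Commute (distMatrix G f) (distMatrix G g) := by
  obtain ⟨k, hk⟩ := hG.distMatrix_mul_mem_range f g
  have mul_isSymm := isSymm_distMatrix G k
  rw [hk, IsSymm, transpose_mul, (isSymm_distMatrix G f).eq, (isSymm_distMatrix G g).eq]
    at mul_isSymm
  exact mul_isSymm.symm

theorem distMatrix_single_one_mul (hG : IsDistanceRegular G D p) (hD : 1 ≤ D) (f : ℕ → ℝ) :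
    distMatrix G (Pi.single 1 1) * distMatrix G f = distMatrix G (adjAction p f) := by
  ext y z
  let h := G.dist y z
  have value_eq (v : V) (hv : G.dist y v = 1) : f (G.dist z v) = f h +
      (if G.dist z v = h - 1 then f (h - 1) - f h else 0) +
      (if G.dist z v = h + 1 then f (h + 1) - f h else 0) := by
    have upper := hG.connected.dist_triangle (u := z) (v := y) (w := v)
    have lower := hG.connected.dist_triangle (u := z) (v := v) (w := y)
    rw [SimpleGraph.dist_comm (u := z) (v := y), hv] at upper
    rw [SimpleGraph.dist_comm (u := z) (v := y), SimpleGraph.dist_comm (u := v), hv] at lower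
    grind
  calc _ = ∑ v with G.dist y v = 1, f (G.dist z v) := by
        simp only [mul_apply, distMatrix_apply, Pi.single_apply, ite_mul, one_mul, zero_mul,
          sum_filter, SimpleGraph.dist_comm (u := z)]
    _ = ∑ v with G.dist y v = 1, _ :=
        sum_congr rfl fun v hv => value_eq v (mem_filter.1 hv).2
    _ = _ := by
        simp only [sum_add_distrib, ← sum_filter, sum_const, filter_filter, nsmul_eq_mul,
          hG.card_filter_dist_eq_one hD, hG.card_filter_dist_succ hD, h,
          hG.card_filter_dist hD ((Nat.sub_le _ 1).trans (hG.dist_le y z)), distMatrix_apply,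
          adjAction]

end Fintype

section Finite

variable [Finite V]

theorem intersection_pred_pos (hG : IsDistanceRegular G D p) {h : ℕ} (hh : 1 ≤ h) (hhD : h ≤ D) :
    0 < p h 1 (h - 1) := by
  obtain ⟨x, y, rfl⟩ := hG.exists_dist_eq hhD
  obtain ⟨v, hxv, hvy⟩ := exists_dist_eq_of_le_dist hG.connected hh
  cases nonempty_fintype V
  rw [← hG.card_filter_dist (hh.trans hhD) (by omega), card_pos]
  exact ⟨v, by simp [hxv, ← hvy, SimpleGraph.dist_comm (u := y)]⟩

theorem valency_eq (hG : IsDistanceRegular G D p) {h : ℕ} (hh : 1 ≤ h) (hhD : h ≤ D) :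
    p 0 1 1 = p h 1 (h - 1) + p h 1 h + p h 1 (h + 1) := by
  cases nonempty_fintype V
  obtain ⟨y, z, rfl⟩ := hG.exists_dist_eq hhD
  have hD := hh.trans hhD
  have pred_ne : G.dist y z - 1 ≠ G.dist y z := by omega
  have card_eq : (distMatrix G (Pi.single 1 1) * distMatrix G (Pi.single (G.dist y z) 1)) y z =
      p (G.dist y z) 1 (G.dist y z) := by
    rw [← hG.card_filter_dist hD hhD, card_filter, mul_apply]
    simp only [distMatrix_apply, Pi.single_apply, ite_and, ite_mul, one_mul, zero_mul,
      Nat.cast_sum, Nat.cast_ite, Nat.cast_one, Nat.cast_zero, SimpleGraph.dist_comm (u := z)]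
  rw [hG.distMatrix_single_one_mul hD] at card_eq
  simp only [distMatrix_apply, adjAction, Pi.single_eq_same, mul_one, ne_eq, pred_ne,
    not_false_eq_true, Pi.single_eq_of_ne, zero_sub, mul_neg, Nat.add_eq_left, one_ne_zero]
    at card_eq
  rify
  linarith

theorem eq_top_of_adjAction_mem (hG : IsDistanceRegular G D p) {S : Submodule ℝ (ℕ → ℝ)}
    (vanishing_mem : ∀ f : ℕ → ℝ, (∀ h ≤ D, f h = 0) → f ∈ S) (single_mem : Pi.single 0 1 ∈ S)
    (adjAction_mem : ∀ f ∈ S, adjAction p f ∈ S) : S = ⊤ := by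
  -- As `c_{k+1} ≠ 0`, the function `adjAction p (Pi.single k 1)` vanishes above `k + 1` but not at
  -- `k + 1`, so subtracting a multiple of it lowers the support.
  have mem_of_vanishing_above (m : ℕ) :
      ∀ f : ℕ → ℝ, (∀ h ≤ D, m ≤ h → f h = 0) → f ∈ S := by
    induction m with
    | zero => exact fun f hf => vanishing_mem f fun h hhD => hf h hhD (Nat.zero_le h)
    | succ m ih =>
      intro f hf
      by_cases hmD : D < m
      · exact ih f fun h hhD hmh => by omega
      obtain ⟨g, g_mem, g_ne_zero, g_above⟩ : ∃ g ∈ S, g m ≠ 0 ∧ ∀ h, m < h → g h = 0 := by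
        cases m with
        | zero => exact ⟨_, single_mem, by simp, fun h hh => by simp [hh.ne']⟩
        | succ k =>
          refine ⟨_, adjAction_mem (Pi.single k 1) (ih _ fun h _ hh => by simp [Nat.ne_of_gt hh]),
            ?_, fun h => adjAction_single_of_lt p⟩
          rw [adjAction_single_succ]
          exact_mod_cast (hG.intersection_pred_pos k.succ_pos (by omega)).ne'
      rw [← sub_add_cancel f ((f m / g m) • g)]
      refine S.add_mem (ih _ fun h hhD hmh => ?_) (S.smul_mem _ g_mem)
      obtain rfl | hlt := hmh.eq_or_lt
      · simp [g_ne_zero]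
      · simp [hf h hhD hlt, g_above h hlt]
  exact eq_top_iff.2 fun f _ => mem_of_vanishing_above (D + 1) f fun h hhD hh => by omega

theorem dist_ne_one_of_dist_eq_one (hG : IsDistanceRegular G D p) (hD : 1 ≤ D) (ha1 : p 1 1 1 = 0)
    {x v w : V} (hv : G.dist x v = 1) (hw : G.dist x w = 1) : G.dist v w ≠ 1 := by
  cases nonempty_fintype V
  intro hvw
  have card_eq := hG.card_filter_dist hD hD v w
  rw [hvw, ha1, card_eq_zero, filter_eq_empty_iff] at card_eq
  exact card_eq (mem_univ x) (by simp only [SimpleGraph.dist_comm (v := x), hv, hw, and_self])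

theorem dist_eq_two_of_dist_eq_one (hG : IsDistanceRegular G D p) (hD : 1 ≤ D)
    (ha1 : p 1 1 1 = 0) {x v w : V} (hv : G.dist x v = 1) (hw : G.dist x w = 1) (hvw : v ≠ w) :
    G.dist w v = 2 := by
  have dist_ne_one := hG.dist_ne_one_of_dist_eq_one hD ha1 hw hv
  have dist_pos := hG.connected.pos_dist_of_ne hvw.symm
  have triangle := hG.connected.dist_triangle (u := w) (v := x) (w := v)
  rw [SimpleGraph.dist_comm (v := x), hv, hw] at triangle
  omega

end Finite

theorem exists_distMatrix_mul_eq_smul [Fintype V] (hG : IsDistanceRegular G D p) (hD : 1 ≤ D)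
    {E : Matrix V V ℝ} {θ : ℝ} (hE : distMatrix G (Pi.single 1 1) * E = θ • E) (f : ℕ → ℝ) :
    ∃ r : ℝ, distMatrix G f * E = r • E := by
  classical
  let S := (Submodule.span ℝ {E}).comap (LinearMap.mulRight ℝ E ∘ₗ distMatrix G)
  have mem_S_iff {f : ℕ → ℝ} : f ∈ S ↔ ∃ r : ℝ, r • E = distMatrix G f * E :=
    Submodule.mem_span_singleton
  suffices S_eq_top : S = ⊤ by
    obtain ⟨r, hr⟩ := mem_S_iff.1 (S_eq_top ▸ Submodule.mem_top : f ∈ S)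
    exact ⟨r, hr.symm⟩
  refine hG.eq_top_of_adjAction_mem (fun f hf => mem_S_iff.2 ⟨0, ?_⟩) (mem_S_iff.2 ⟨1, ?_⟩) ?_
  · have distMatrix_eq_zero : distMatrix G f = 0 := by
      ext y z
      exact hf _ (hG.dist_le y z)
    rw [distMatrix_eq_zero, Matrix.zero_mul, zero_smul]
  · rw [distMatrix_single_zero hG.connected, Matrix.one_mul, one_smul]
  · intro f hf
    obtain ⟨r, hr⟩ := mem_S_iff.1 hf
    refine mem_S_iff.2 ⟨r * θ, ?_⟩
    rw [← hG.distMatrix_single_one_mul hD, Matrix.mul_assoc, ← hr, Matrix.mul_smul, hE, smul_smul]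

end IsDistanceRegular

section QPolynomial

/-- The matrices whose `(y, z)`-entry is a linear combination of the powers `τ(∂(y, z)) ^ m` with
`m ∈ S`. -/
noncomputable def distPowSpan (G : SimpleGraph V) (τ : ℕ → ℝ) (S : Set ℕ) :
    Submodule ℝ (Matrix V V ℝ) :=
  Submodule.span ℝ ((fun m => distMatrix G (τ ^ m)) '' S)

variable {G : SimpleGraph V} {τ : ℕ → ℝ}

theorem distMatrix_pow_mem_distPowSpan {S : Set ℕ} {m : ℕ} (hm : m ∈ S) :
    distMatrix G (τ ^ m) ∈ distPowSpan G τ S :=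
  Submodule.subset_span ⟨m, hm, rfl⟩

theorem distPowSpan_mono {S T : Set ℕ} (hST : S ⊆ T) : distPowSpan G τ S ≤ distPowSpan G τ T :=
  Submodule.span_mono (Set.image_mono hST)

theorem distPowSpan_le_range (S : Set ℕ) : distPowSpan G τ S ≤ LinearMap.range (distMatrix G) := by
  refine Submodule.span_le.2 ?_
  rintro _ ⟨m, -, rfl⟩
  exact LinearMap.mem_range_self _ _

theorem hadamard_mem_distPowSpan {i k : ℕ} {X Y : Matrix V V ℝ}
    (hX : X ∈ distPowSpan G τ (Set.Iic i)) (hY : Y ∈ distPowSpan G τ (Set.Iic k)) :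
    X ⊙ Y ∈ distPowSpan G τ (Set.Iic (i + k)) := by
  induction hX, hY using Submodule.span_induction₂ with
  | mem_mem _ _ hx hy =>
    obtain ⟨m, hm, rfl⟩ := hx
    obtain ⟨l, hl, rfl⟩ := hy
    rw [distMatrix_hadamard, ← pow_add]
    exact distMatrix_pow_mem_distPowSpan (Set.mem_Iic.2 (add_le_add hm hl))
  | zero_left => rw [zero_hadamard]; exact zero_mem _
  | zero_right => rw [hadamard_zero]; exact zero_mem _
  | add_left _ _ _ _ _ _ h₁ h₂ => rw [add_hadamard]; exact add_mem h₁ h₂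
  | add_right _ _ _ _ _ _ h₁ h₂ => rw [hadamard_add]; exact add_mem h₁ h₂
  | smul_left r _ _ _ _ h => rw [smul_hadamard]; exact Submodule.smul_mem _ r h
  | smul_right r _ _ _ _ h => rw [hadamard_smul]; exact Submodule.smul_mem _ r h

theorem distMatrix_eval_mem_distPowSpan (P : Polynomial ℝ) :
    distMatrix G (fun h => P.eval (τ h)) ∈ distPowSpan G τ (Set.Iic P.natDegree) := by
  have eval_eq : (fun h => P.eval (τ h)) = ∑ m ∈ range (P.natDegree + 1), P.coeff m • τ ^ m := by
    ext h
    simp [Polynomial.eval_eq_sum_range]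
  rw [eval_eq, map_sum]
  refine sum_mem fun m hm => ?_
  rw [map_smul]
  exact Submodule.smul_mem _ _ (distMatrix_pow_mem_distPowSpan (mem_range_succ_iff.1 hm))

theorem distMatrix_mem_distPowSpan {D : ℕ} (dist_le : ∀ x y, G.dist x y ≤ D)
    (hτ : Set.InjOn τ (Set.Iic D)) (f : ℕ → ℝ) :
    distMatrix G f ∈ distPowSpan G τ (Set.Iic D) := by
  rw [← coe_Iic] at hτ
  let P := Lagrange.interpolate (Iic D) τ f
  have distMatrix_eq : distMatrix G f = distMatrix G (fun h => P.eval (τ h)) := by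
    ext y z
    exact (Lagrange.eval_interpolate_at_node f hτ (mem_Iic.2 (dist_le y z))).symm
  have natDegree_le : P.natDegree ≤ D := by
    have degree_le := Lagrange.degree_interpolate_le f hτ
    rw [Nat.card_Iic, Nat.add_sub_cancel] at degree_le
    exact Polynomial.natDegree_le_of_degree_le degree_le
  rw [distMatrix_eq]
  exact distPowSpan_mono (Set.Iic_subset_Iic.2 natDegree_le) (distMatrix_eval_mem_distPowSpan P)

variable [Fintype V] [DecidableEq V]

/-- The Gram–Schmidt orthogonalization of the matrices `τ(∂(y, z)) ^ m`. If `IsDualEigenvalueSeq`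
holds for `τ`, the first `D + 1` of them are the primitive idempotents of `G`, in the `Q`-polynomial
order and up to scalar factors. -/
noncomputable def idempotentMatrix (G : SimpleGraph V) (τ : ℕ → ℝ) : ℕ → Matrix V V ℝ :=
  matrixGramSchmidt fun m => distMatrix G (τ ^ m)

theorem idempotentMatrix_mem_distPowSpan (j : ℕ) :
    idempotentMatrix G τ j ∈ distPowSpan G τ (Set.Iic j) := by
  rw [distPowSpan, ← span_matrixGramSchmidt_Iic]
  exact Submodule.subset_span ⟨j, Set.self_mem_Iic, rfl⟩

theorem idempotentMatrix_mem_range (j : ℕ) :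
    idempotentMatrix G τ j ∈ LinearMap.range (distMatrix G) :=
  distPowSpan_le_range _ (idempotentMatrix_mem_distPowSpan j)

theorem isSymm_idempotentMatrix (j : ℕ) : (idempotentMatrix G τ j).IsSymm := by
  obtain ⟨e, he⟩ := idempotentMatrix_mem_range (G := G) (τ := τ) j
  rw [← he]
  exact isSymm_distMatrix G e

theorem exists_idempotentMatrix_one_eq (G : SimpleGraph V) (τ : ℕ → ℝ) :
    ∃ c : ℝ, ∀ x y, idempotentMatrix G τ 1 x y = τ (G.dist x y) - c := by
  have mem_span := sub_matrixGramSchmidt_mem_span (fun m => distMatrix G (τ ^ m)) 1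
  have Iio_one : Set.Iio 1 = ({0} : Set ℕ) := Set.ext fun _ => Nat.lt_one_iff
  rw [Iio_one, Set.image_singleton, Submodule.mem_span_singleton] at mem_span
  obtain ⟨c, hc⟩ := mem_span
  refine ⟨c, fun x y => ?_⟩
  have entry_eq := congrFun₂ hc x y
  simp only [Matrix.smul_apply, Matrix.sub_apply, distMatrix_apply, pow_zero, pow_one, Pi.one_apply,
    smul_eq_mul, mul_one] at entry_eq
  rw [idempotentMatrix, entry_eq, sub_sub_cancel]

theorem sum_idempotentMatrix_mul_mul_eq_zero {i j : ℕ} (hij : i + 1 < j ∨ j + 1 < i) :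
    ∑ y, ∑ z, idempotentMatrix G τ i y z * idempotentMatrix G τ 1 y z *
      idempotentMatrix G τ j y z = 0 := by
  have of_lt {i j : ℕ} (hij : i + 1 < j) : ∑ y, ∑ z, idempotentMatrix G τ j y z *
      (idempotentMatrix G τ i y z * idempotentMatrix G τ 1 y z) = 0 :=
    sum_matrixGramSchmidt_mul_eq_zero _ _ <| distPowSpan_mono (Set.Iic_subset_Iio.2 hij) <|
      hadamard_mem_distPowSpan (idempotentMatrix_mem_distPowSpan i)
        (idempotentMatrix_mem_distPowSpan 1)
  obtain hij | hij := hij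
  · simpa only [mul_comm, mul_left_comm, mul_assoc] using of_lt hij
  · simpa only [mul_comm, mul_left_comm, mul_assoc] using of_lt hij

end QPolynomial

/-- `τ 0, …, τ D` is a dual eigenvalue sequence of a `Q`-polynomial structure on `G`, up to an
affine change of `τ`: its terms are distinct, and multiplication by the adjacency matrix does not
raise the degree of a matrix that is polynomial in `τ(∂(y, z))`. -/
structure IsDualEigenvalueSeq [Fintype V] (G : SimpleGraph V) (D : ℕ) (τ : ℕ → ℝ) : Prop where
  injOn : Set.InjOn τ (Set.Iic D)
  adj_mul_mem : ∀ m, distMatrix G (Pi.single 1 1) * distMatrix G (τ ^ m) ∈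
    distPowSpan G τ (Set.Iic m)

namespace IsDualEigenvalueSeq

variable [Fintype V] {G : SimpleGraph V} {D : ℕ} {p : ℕ → ℕ → ℕ → ℕ}
  {τ : ℕ → ℝ}

theorem exists_sum_smul_idempotentMatrix_eq_one [DecidableEq V] (hτ : IsDualEigenvalueSeq G D τ)
    (hG : IsDistanceRegular G D p) :
    ∃ u : ℕ → ℝ, ∑ j ∈ range (D + 1), u j • idempotentMatrix G τ j = 1 := by
  have one_mem := distMatrix_mem_distPowSpan hG.dist_le hτ.injOn (Pi.single 0 1)
  rw [distMatrix_single_zero hG.connected, distPowSpan, ← span_matrixGramSchmidt_Iic, ← coe_Iic,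
    Submodule.mem_span_image_finset_iff_exists_fun'] at one_mem
  obtain ⟨u, hu⟩ := one_mem
  rw [Nat.range_succ_eq_Iic]
  exact ⟨u, hu⟩

theorem exists_distMatrix_mul_idempotentMatrix_eq [DecidableEq V] (hτ : IsDualEigenvalueSeq G D τ)
    (hG : IsDistanceRegular G D p) (hD : 1 ≤ D) (f : ℕ → ℝ) (j : ℕ) :
    ∃ r : ℝ, distMatrix G f * idempotentMatrix G τ j = r • idempotentMatrix G τ j := by
  obtain ⟨θ, hθ⟩ := exists_mul_matrixGramSchmidt_eq_smul (isSymm_distMatrix G (Pi.single 1 1))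
    hτ.adj_mul_mem j
  exact hG.exists_distMatrix_mul_eq_smul hD hθ f

theorem idempotentMatrix_mul_diagonal_mul_eq_zero [DecidableEq V] (hτ : IsDualEigenvalueSeq G D τ)
    (hG : IsDistanceRegular G D p) (hD : 1 ≤ D) {i j : ℕ} (hij : i + 1 < j ∨ j + 1 < i) (x : V) :
    idempotentMatrix G τ i * diagonal (idempotentMatrix G τ 1 x) * idempotentMatrix G τ j = 0 := by
  have exists_mul_self_eq (k : ℕ) :
      ∃ r : ℝ, idempotentMatrix G τ k * idempotentMatrix G τ k = r • idempotentMatrix G τ k := by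
    obtain ⟨e, he⟩ := idempotentMatrix_mem_range (G := G) (τ := τ) k
    obtain ⟨r, hr⟩ := hτ.exists_distMatrix_mul_idempotentMatrix_eq hG hD e k
    exact ⟨r, by rwa [he] at hr⟩
  obtain ⟨_, hi⟩ := exists_mul_self_eq i
  obtain ⟨_, h1⟩ := exists_mul_self_eq 1
  obtain ⟨_, hj⟩ := exists_mul_self_eq j
  exact mul_diagonal_mul_eq_zero (isSymm_idempotentMatrix i) (isSymm_idempotentMatrix 1)
    (isSymm_idempotentMatrix j) hi h1 hj (sum_idempotentMatrix_mul_mul_eq_zero hij) x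

theorem exists_distMatrix_eq_sum [DecidableEq V] (hτ : IsDualEigenvalueSeq G D τ)
    (hG : IsDistanceRegular G D p) (hD : 1 ≤ D) {u : ℕ → ℝ}
    (hu : ∑ j ∈ range (D + 1), u j • idempotentMatrix G τ j = 1) (f : ℕ → ℝ) :
    ∃ r : ℕ → ℝ, distMatrix G f = ∑ j ∈ range (D + 1), r j • u j • idempotentMatrix G τ j := by
  choose r hr using hτ.exists_distMatrix_mul_idempotentMatrix_eq hG hD f
  refine ⟨r, ?_⟩
  rw [← Matrix.mul_one (distMatrix G f), ← hu, mul_sum]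
  exact sum_congr rfl fun j _ => by rw [mul_smul_comm, hr, smul_comm]

theorem exists_commutator_eq (hτ : IsDualEigenvalueSeq G D τ) [DecidableEq V]
    (hG : IsDistanceRegular G D p) (hD : 1 ≤ D) (f g : ℕ → ℝ) :
    ∃ ζ : ℕ → ℝ, ∀ x,
      distMatrix G f * diagonal (distMatrix G τ x) * distMatrix G g -
        distMatrix G g * diagonal (distMatrix G τ x) * distMatrix G f =
      distMatrix G ζ * diagonal (distMatrix G τ x) -
        diagonal (distMatrix G τ x) * distMatrix G ζ := by
  obtain ⟨u, hu⟩ := hτ.exists_sum_smul_idempotentMatrix_eq_one hG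
  obtain ⟨r, hr⟩ := hτ.exists_distMatrix_eq_sum hG hD hu f
  obtain ⟨s, hs⟩ := hτ.exists_distMatrix_eq_sum hG hD hu g
  obtain ⟨ζ, hζ⟩ := exists_forall_tridiagonal_commutator_eq hu r s
  have sum_mem_range : ∑ j ∈ range (D + 1), ζ j • u j • idempotentMatrix G τ j ∈
      LinearMap.range (distMatrix G) :=
    sum_mem fun j _ =>
      Submodule.smul_mem _ _ (Submodule.smul_mem _ _ (idempotentMatrix_mem_range j))
  obtain ⟨ξ, hξ⟩ := sum_mem_range
  obtain ⟨c, hc⟩ := exists_idempotentMatrix_one_eq G τ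
  refine ⟨ξ, fun x => ?_⟩
  have diagonal_eq : diagonal (distMatrix G τ x) =
      diagonal (idempotentMatrix G τ 1 x) + c • 1 := by
    rw [smul_one_eq_diagonal, diagonal_add]
    exact congrArg diagonal (funext fun y => by rw [hc, distMatrix_apply, sub_add_cancel])
  have commutator_eq := hζ (diagonal (idempotentMatrix G τ 1 x)) fun i j hij => by
    rw [smul_mul_assoc, smul_mul_assoc, mul_smul_comm,
      hτ.idempotentMatrix_mul_diagonal_mul_eq_zero hG hD hij, smul_zero, smul_zero]
  rw [← hr, ← hs, ← hξ] at commutator_eq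
  simpa only [diagonal_eq, mul_add, add_mul, mul_smul_comm, smul_mul_assoc, mul_one, one_mul,
    (hG.commute_distMatrix g f).eq, add_sub_add_right_eq_sub] using commutator_eq

theorem balanced_set (hτ : IsDualEigenvalueSeq G D τ) (hG : IsDistanceRegular G D p) (hD : 1 ≤ D)
    (i j : ℕ) : ∃ ζ : ℕ → ℝ, ∀ x y z,
      ∑ v with G.dist y v = i ∧ G.dist z v = j, τ (G.dist x v) -
        ∑ v with G.dist y v = j ∧ G.dist z v = i, τ (G.dist x v) =
      ζ (G.dist y z) * (τ (G.dist x z) - τ (G.dist x y)) := by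
  classical
  obtain ⟨ζ, hζ⟩ := hτ.exists_commutator_eq hG hD (Pi.single i 1) (Pi.single j 1)
  refine ⟨ζ, fun x y z => ?_⟩
  have sum_eq (i j : ℕ) : (distMatrix G (Pi.single i 1) * diagonal (distMatrix G τ x) *
      distMatrix G (Pi.single j 1)) y z =
        ∑ v with G.dist y v = i ∧ G.dist z v = j, τ (G.dist x v) := by
    rw [mul_apply, sum_filter]
    refine sum_congr rfl fun v _ => ?_
    rw [mul_diagonal, distMatrix_apply, distMatrix_apply, distMatrix_apply, Pi.single_apply,
      Pi.single_apply, SimpleGraph.dist_comm (u := v)]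
    simp only [mul_ite, ite_mul, one_mul, mul_one, zero_mul, mul_zero, ← ite_and, and_comm]
  have entry_eq := congrFun₂ (hζ x) y z
  rw [Matrix.sub_apply, Matrix.sub_apply, sum_eq, sum_eq, mul_diagonal, diagonal_mul] at entry_eq
  rw [entry_eq]
  simp only [distMatrix_apply]
  ring

end IsDualEigenvalueSeq

section ClassicalParameters

variable {D : ℕ} {p : ℕ → ℕ → ℕ → ℕ} {b α β : ℝ}

theorem gaussBracket_eq_div (hb : b ≠ 1) (i : ℕ) : gaussBracket b i = (b ^ i - 1) / (b - 1) :=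
  geom_sum_eq hb i

namespace HasClassicalParams

theorem intersection_diam_eq_zero (hcp : HasClassicalParams D p b α β) : p D 1 (D + 1) = 0 := by
  have cast_eq_zero := hcp.2.2.2 D le_rfl
  rw [sub_self, zero_mul] at cast_eq_zero
  exact_mod_cast cast_eq_zero

theorem exists_eq_quadratic (hcp : HasClassicalParams D p b α β) (hb : b ≠ 1) :
    ∃ γ₀ γ₁ γ₂ δ₀ δ₁ : ℝ, ∀ h ≤ D,
      (p h 1 (h - 1) : ℝ) = γ₀ + γ₁ * b ^ h + γ₂ * (b ^ h) ^ 2 ∧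
      (p h 1 (h + 1) : ℝ) = δ₀ + δ₁ * b ^ h + b * γ₂ * (b ^ h) ^ 2 := by
  obtain ⟨b_ne_zero, -, hc, hb'⟩ := hcp
  have sub_ne_zero : b - 1 ≠ 0 := sub_ne_zero.2 hb
  refine ⟨-(1 - α / (b - 1)) / (b - 1),
    (1 - α / (b - 1)) / (b - 1) - α / (b * (b - 1) ^ 2), α / (b * (b - 1) ^ 2),
    b ^ D * (β + α / (b - 1)) / (b - 1),
    -(β + α / (b - 1)) / (b - 1) - α * b ^ D / (b - 1) ^ 2, fun h hh => ⟨?_, ?_⟩⟩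
  · rw [hc h hh, gaussBracket_eq_div hb, gaussBracket_eq_div hb]
    cases h with
    | zero => field_simp; ring
    | succ h => rw [Nat.add_sub_cancel, pow_succ]; field_simp; ring
  · rw [hb' h hh, gaussBracket_eq_div hb, gaussBracket_eq_div hb]
    field_simp
    ring

theorem intersection_pred_mul_pow_sub_eq (hcp : HasClassicalParams D p b α β) (m : ℕ) {h : ℕ}
    (hh : h ≤ D) :
    (p h 1 (h - 1) : ℝ) * ((b⁻¹ ^ (h - 1)) ^ m - (b⁻¹ ^ h) ^ m) =
      p h 1 (h - 1) * ((b ^ m - 1) * (b⁻¹ ^ h) ^ m) := by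
  have b_ne_zero := hcp.1
  cases h with
  | zero => rw [hcp.2.2.1 0 hh, gaussBracket, range_zero, sum_empty, zero_mul, zero_mul, zero_mul]
  | succ h =>
    rw [Nat.add_sub_cancel, pow_succ b⁻¹ h, mul_pow, inv_pow b m]
    field_simp

theorem exists_adjAction_pow_eq (hcp : HasClassicalParams D p b α β) (hb : b ≠ 1) (m : ℕ) :
    ∃ r₀ r₁ r₂ : ℝ, ∀ h ≤ D, adjAction p ((fun k => b⁻¹ ^ k) ^ m) h =
      r₀ * (b⁻¹ ^ h) ^ m + r₁ * (b⁻¹ ^ h) ^ (m - 1) + r₂ * (b⁻¹ ^ h) ^ (m - 2) := by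
  obtain ⟨γ₀, γ₁, γ₂, δ₀, δ₁, hγδ⟩ := hcp.exists_eq_quadratic hb
  let r₁ (m : ℕ) := γ₁ * (b ^ m - 1) + δ₁ * (b⁻¹ ^ m - 1)
  let r₂ (m : ℕ) := γ₂ * (b ^ m - 1) + b * γ₂ * (b⁻¹ ^ m - 1)
  have r₁_zero : r₁ 0 = 0 := by simp [r₁]
  have r₂_zero : r₂ 0 = 0 := by simp [r₂]
  have r₂_one : r₂ 1 = 0 := by
    simp only [r₂, pow_one]
    linear_combination γ₂ * mul_inv_cancel₀ hcp.1
  refine ⟨p 0 1 1 + γ₀ * (b ^ m - 1) + δ₀ * (b⁻¹ ^ m - 1), r₁ m, r₂ m, fun h hh => ?_⟩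
  have pow_mul_inv_pow : b ^ h * b⁻¹ ^ h = 1 := by
    rw [← mul_pow, mul_inv_cancel₀ hcp.1, one_pow]
  have linear_term : r₁ m * (b ^ h * (b⁻¹ ^ h) ^ m) = r₁ m * (b⁻¹ ^ h) ^ (m - 1) := by
    cases m with
    | zero => rw [r₁_zero, zero_mul, zero_mul]
    | succ m => rw [pow_succ', ← mul_assoc (b ^ h), pow_mul_inv_pow, one_mul, Nat.add_sub_cancel]
  have quadratic_term : r₂ m * ((b ^ h) ^ 2 * (b⁻¹ ^ h) ^ m) = r₂ m * (b⁻¹ ^ h) ^ (m - 2) := by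
    match m with
    | 0 => rw [r₂_zero, zero_mul, zero_mul]
    | 1 => rw [r₂_one, zero_mul, zero_mul]
    | m + 2 =>
      rw [pow_add _ m, mul_left_comm ((b ^ h) ^ 2), ← mul_pow, pow_mul_inv_pow, one_pow, mul_one,
        Nat.add_sub_cancel]
  simp only [adjAction, Pi.pow_apply]
  rw [hcp.intersection_pred_mul_pow_sub_eq m hh, pow_succ b⁻¹ h, mul_pow, (hγδ h hh).1,
    (hγδ h hh).2]
  linear_combination linear_term + quadratic_term

theorem ne_one [Finite V] {G : SimpleGraph V} (hcp : HasClassicalParams D p b α β)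
    (hG : IsDistanceRegular G D p) (hD : 3 ≤ D) (ha1 : p 1 1 1 = 0) (ha2 : p 2 1 2 ≠ 0) :
    b ≠ 1 := by
  rintro rfl
  obtain ⟨-, -, hc, hb⟩ := hcp
  have bracket_one (i : ℕ) : gaussBracket 1 i = i := by simp [gaussBracket]
  simp only [bracket_one] at hc hb
  have valency_one := congrArg (Nat.cast (R := ℝ)) (hG.valency_eq le_rfl (by omega : 1 ≤ D))
  have valency_two := congrArg (Nat.cast (R := ℝ)) (hG.valency_eq one_le_two (by omega : 2 ≤ D))
  push_cast [hb 0 (Nat.zero_le D), hb 1 (by omega), hb 2 (by omega), hc 1 (by omega),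
    hc 2 (by omega), ha1] at valency_one valency_two
  have c_two := hc 2 (by omega)
  have c_three := hc 3 hD
  push_cast at c_two c_three
  have a_two_pos : (0 : ℝ) < p 2 1 2 := by exact_mod_cast Nat.pos_of_ne_zero ha2
  have c_three_pos : (0 : ℝ) < p 3 1 2 := by
    exact_mod_cast hG.intersection_pred_pos (by omega : 1 ≤ 3) hD
  have a_two_eq : (p 2 1 2 : ℝ) = -4 * α := by linear_combination 2 * valency_one - valency_two
  rw [a_two_eq] at a_two_pos
  have one_lt_c_two : (1 : ℝ) < p 2 1 1 := by linarith
  have c_two_lt_two : (p 2 1 1 : ℝ) < 2 := by linarith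
  norm_cast at one_lt_c_two c_two_lt_two
  omega

theorem isDualEigenvalueSeq [Fintype V] {G : SimpleGraph V}
    (hcp : HasClassicalParams D p b α β) (hG : IsDistanceRegular G D p) (hD : 1 ≤ D) (hb : b ≠ 1) :
    IsDualEigenvalueSeq G D fun h => b⁻¹ ^ h where
  injOn i _ j _ hij := by
    have inv_pow_eq : b⁻¹ ^ i = b⁻¹ ^ j := hij
    rw [inv_pow, inv_pow] at inv_pow_eq
    have abs_pow_eq : |b| ^ i = |b| ^ j := by
      rw [← abs_pow, ← abs_pow, inv_injective inv_pow_eq]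
    refine (pow_right_inj₀ (abs_pos.2 hcp.1) fun h => ?_).1 abs_pow_eq
    exact (eq_or_eq_neg_of_abs_eq h).elim hb hcp.2.1
  adj_mul_mem m := by
    obtain ⟨r₀, r₁, r₂, hr⟩ := hcp.exists_adjAction_pow_eq hb m
    let τ : ℕ → ℝ := fun h => b⁻¹ ^ h
    have distMatrix_eq : distMatrix G (adjAction p (τ ^ m)) = r₀ • distMatrix G (τ ^ m) +
        r₁ • distMatrix G (τ ^ (m - 1)) + r₂ • distMatrix G (τ ^ (m - 2)) := by
      ext y z
      exact hr _ (hG.dist_le y z)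
    rw [hG.distMatrix_single_one_mul hD, distMatrix_eq]
    have pow_mem {k : ℕ} (hk : k ≤ m) : distMatrix G (τ ^ k) ∈ distPowSpan G τ (Set.Iic m) :=
      distMatrix_pow_mem_distPowSpan hk
    exact add_mem (add_mem (Submodule.smul_mem _ _ (pow_mem le_rfl))
      (Submodule.smul_mem _ _ (pow_mem (Nat.sub_le m 1))))
      (Submodule.smul_mem _ _ (pow_mem (Nat.sub_le m 2)))

end HasClassicalParams

end ClassicalParameters

section BalancedSet

variable [Fintype V] {G : SimpleGraph V} {D : ℕ} {p : ℕ → ℕ → ℕ → ℕ}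

namespace IsDistanceRegular

theorem sum_filter_dist_eq_mul (hG : IsDistanceRegular G D p) {i j : ℕ} (hi : i ≤ D) (hj : j ≤ D)
    {y z : V} {F : V → ℝ} {r : ℝ} (hF : ∀ v, G.dist y v = i → G.dist z v = j → F v = r) :
    ∑ v with G.dist y v = i ∧ G.dist z v = j, F v = p (G.dist y z) i j * r := by
  rw [← hG.card_filter_dist hi hj, ← nsmul_eq_mul]
  refine sum_eq_card_nsmul fun v hv => ?_
  obtain ⟨-, hy, hz⟩ := mem_filter.1 hv
  exact hF v hy hz

theorem sum_pow_dist_eq (hG : IsDistanceRegular G D p) (hD : 1 ≤ D) {x z w : V} (t : ℝ)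
    (hxw : G.dist x w = 1) (hzw : G.dist z w = G.dist x z + 1) :
    ∑ v with G.dist x v = G.dist x z ∧ G.dist z v = 1, t ^ G.dist w v =
      p (G.dist x z) 1 (G.dist x z) * t ^ (G.dist x z + 1) -
        #{v | (G.dist x v = G.dist x z ∧ G.dist z v = 1) ∧ G.dist w v = G.dist x z} *
          (t ^ (G.dist x z + 1) - t ^ G.dist x z) := by
  have pow_eq (v : V) (hv : G.dist x v = G.dist x z ∧ G.dist z v = 1) : t ^ G.dist w v =
      t ^ (G.dist x z + 1) -
        if G.dist w v = G.dist x z then t ^ (G.dist x z + 1) - t ^ G.dist x z else 0 := by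
    have upper := hG.connected.dist_triangle (u := w) (v := x) (w := v)
    have lower := hG.connected.dist_triangle (u := z) (v := v) (w := w)
    rw [SimpleGraph.dist_comm (u := w) (v := x)] at upper
    rw [SimpleGraph.dist_comm (u := v) (v := w)] at lower
    grind
  rw [sum_congr rfl fun v hv => pow_eq v (mem_filter.1 hv).2, sum_sub_distrib, sum_const,
    ← sum_filter, sum_const, filter_filter, nsmul_eq_mul, nsmul_eq_mul,
    hG.card_filter_dist (hG.dist_le x z) hD,
    hG.intersection_comm (hG.dist_le x z) hD (hG.dist_le x z)]

end IsDistanceRegular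

theorem IsDualEigenvalueSeq.dist_ne_of_adj {t : ℝ}
    (hτ : IsDualEigenvalueSeq G D fun h => t ^ h) (hG : IsDistanceRegular G D p) (hD : 1 ≤ D)
    (ha1 : p 1 1 1 = 0) {x z z' w : V} (hz' : G.dist x z' = G.dist x z) (hadj : G.Adj z z')
    (hxw : G.dist x w = 1) (hzw : G.dist z w = G.dist x z + 1) : G.dist w z' ≠ G.dist x z := by
  obtain ⟨ζ, hζ⟩ := hτ.balanced_set hG hD 1 (G.dist x z)
  have base_w := hζ w x z
  have base_x := hζ x x z
  have hi := hG.dist_le x z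
  have sum_w : ∑ v with G.dist x v = 1 ∧ G.dist z v = G.dist x z, t ^ G.dist w v =
      p (G.dist x z) 1 (G.dist x z) * t ^ 2 :=
    hG.sum_filter_dist_eq_mul hD hi fun v hxv hzv => by
      rw [hG.dist_eq_two_of_dist_eq_one hD ha1 hxv hxw (by rintro rfl; omega)]
  have sum_x : ∑ v with G.dist x v = 1 ∧ G.dist z v = G.dist x z, t ^ G.dist x v =
      p (G.dist x z) 1 (G.dist x z) * t :=
    hG.sum_filter_dist_eq_mul hD hi fun v hxv _ => by rw [hxv, pow_one]
  have sum_x' : ∑ v with G.dist x v = G.dist x z ∧ G.dist z v = 1, t ^ G.dist x v =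
      p (G.dist x z) 1 (G.dist x z) * t ^ G.dist x z := by
    rw [hG.intersection_comm hi hD hi]
    exact hG.sum_filter_dist_eq_mul hi hD fun v hxv _ => by rw [hxv]
  rw [sum_x, sum_x', SimpleGraph.dist_self, pow_zero] at base_x
  rw [sum_w, hG.sum_pow_dist_eq hD t hxw hzw, SimpleGraph.dist_comm (u := w) (v := z),
    SimpleGraph.dist_comm (u := w) (v := x), hzw, hxw, pow_one] at base_w
  have pow_ne : t ^ (G.dist x z + 1) ≠ t ^ G.dist x z := fun pow_eq =>
    absurd (hτ.injOn (hzw.symm.trans_le (hG.dist_le z w)) hi pow_eq) (by omega)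
  have card_mul_eq_zero :
      (#{v | (G.dist x v = G.dist x z ∧ G.dist z v = 1) ∧ G.dist w v = G.dist x z} : ℝ) *
        (t ^ (G.dist x z + 1) - t ^ G.dist x z) = 0 := by
    linear_combination base_w - t * base_x
  rw [mul_eq_zero_iff_right (sub_ne_zero.2 pow_ne), Nat.cast_eq_zero, card_eq_zero,
    filter_eq_empty_iff] at card_mul_eq_zero
  exact fun hw => card_mul_eq_zero (mem_univ z')
    ⟨⟨hz', SimpleGraph.dist_eq_one_iff_adj.2 hadj⟩, hw⟩

theorem IsDualEigenvalueSeq.Bset_subset_of_adj {t : ℝ}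
    (hτ : IsDualEigenvalueSeq G D fun h => t ^ h) (hG : IsDistanceRegular G D p) (hD : 1 ≤ D)
    (ha1 : p 1 1 1 = 0) {x z z' : V} (hz' : G.dist x z' = G.dist x z) (hadj : G.Adj z z') :
    Bset G x z ⊆ Bset G x z' := by
  rintro w ⟨hxw, hzw⟩
  have dist_ne := hτ.dist_ne_of_adj hG hD ha1 hz' hadj hxw hzw
  have upper := hG.connected.dist_triangle (u := w) (v := x) (w := z')
  have lower := hG.connected.dist_triangle (u := z) (v := z') (w := w)
  rw [SimpleGraph.dist_comm (u := w) (v := x), hxw, hz'] at upper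
  rw [hzw, SimpleGraph.dist_eq_one_iff_adj.2 hadj, SimpleGraph.dist_comm (u := z')] at lower
  refine ⟨hxw, ?_⟩
  rw [SimpleGraph.dist_comm (u := z'), hz']
  omega

end BalancedSet

/-- In a distance-regular graph with classical parameters `(D, b, α, β)`,
`D ≥ 3`, `a₁ = 0` and `a₂ ≠ 0`: for any vertex `x`, any `1 ≤ i ≤ D`, and any adjacent
vertices `z, z' ∈ Γ_i(x)`, one has `B(x,z) = B(x,z')`. -/
theorem Bset_eq_of_adj [Fintype V] (G : SimpleGraph V) (hconn : G.Connected)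
    (D : ℕ) (hD : 3 ≤ D)
    (hdiam_le : ∀ x y : V, G.dist x y ≤ D) (hdiam : ∃ x y : V, G.dist x y = D)
    (p : ℕ → ℕ → ℕ → ℕ) (hdr : G.IsDistRegularWith D p)
    (b α β : ℝ) (hcp : HasClassicalParams D p b α β)
    (ha1 : p 1 1 1 = 0) (ha2 : p 2 1 2 ≠ 0)
    (x : V) (i : ℕ) (hi1 : 1 ≤ i) (hiD : i ≤ D)
    (z z' : V) (hz : G.dist x z = i) (hz' : G.dist x z' = i) (hadj : G.Adj z z') :
    Bset G x z = Bset G x z' := by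
  have hG : IsDistanceRegular G D p :=
    ⟨hconn, hdiam_le, hdiam, hdr, hcp.intersection_diam_eq_zero⟩
  have one_le_D : 1 ≤ D := by omega
  have hτ := hcp.isDualEigenvalueSeq hG one_le_D (hcp.ne_one hG hD ha1 ha2)
  have dist_eq : G.dist x z' = G.dist x z := hz'.trans hz.symm
  exact (hτ.Bset_subset_of_adj hG one_le_D ha1 dist_eq hadj).antisymm
    (hτ.Bset_subset_of_adj hG one_le_D ha1 dist_eq.symm hadj.symm)
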